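/- arXiv:2305.08463 — 2 statements merged into one kernel-verified Lean document; each statement's English description precedes it below -/
import Mathlib

section
/- Assume Assumptions RS and QM, that the kernel K is differentiable with a Lipschitz-continuous gradient on ℝ^d, and let (y_t)_{t∈ℕ} be the mode estimate sequence obtained by the MS iteration starting from y₁ with f(y₁) > 0. Then there exists a constant c̄ > 0 such that the relative error condition ‖y_{t+1} − y_t‖ ≥ c̄·‖∇f(y_{t+1})‖ holds for every t ∈ ℕ; in fact one can take c̄ = h^{d+2}/(C₂ + C₃) where C₂ > 0 bounds Ǩ from above and C₃ ≥ 0 is a Lipschitz constant of ∇K. -/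
open Set Filter Topology MeasureTheory
open scoped BigOperators RealInnerProductSpace

noncomputable section

/-- Euclidean space `ℝ^d`. -/
abbrev Euc (d : ℕ) := EuclideanSpace ℝ (Fin d)

/-- The convex subdifferential of a function `g` (viewed as a function on `[0,∞)`) at `u`. -/
def subdiffIci (g : ℝ → ℝ) (u : ℝ) : Set ℝ :=
  {c : ℝ | ∀ v ∈ Set.Ici (0:ℝ), g v - g u ≥ c * (v - u)}

/-- Assumption RS: the kernel `K` is bounded, continuous, non-negative, normalized, and
radially symmetric with profile `Khat`. -/
structure AssumptionRS (d : ℕ) (K : Euc d → ℝ) (Khat : ℝ → ℝ) : Prop where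
  bounded : ∃ M : ℝ, ∀ x, K x ≤ M
  cont : Continuous K
  nonneg : ∀ x, 0 ≤ K x
  normalized : ∫ x, K x = 1
  radial : ∀ x, K x = Khat (‖x‖ ^ 2 / 2)

/-- Assumption QM for the profile `Khat`, together with the selection `Kcheck`:
`Khat` is convex and non-increasing on `[0,∞)`, its right derivative at `0` exists as a real
number and equals `-(Kcheck 0)` (i.e. `Kcheck 0 = -Khat'(0+) > -∞`), and for every `u > 0`,
`-(Kcheck u)` belongs to the subdifferential of `Khat` at `u`. -/
structure AssumptionQM (Khat Kcheck : ℝ → ℝ) : Prop where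
  convexOn : ConvexOn ℝ (Set.Ici (0:ℝ)) Khat
  antitoneOn : AntitoneOn Khat (Set.Ici (0:ℝ))
  rderiv0 : Filter.Tendsto (fun v => (Khat v - Khat 0) / v)
      (nhdsWithin 0 (Set.Ioi 0)) (nhds (-(Kcheck 0)))
  subdiff : ∀ u : ℝ, 0 < u → -(Kcheck u) ∈ subdiffIci Khat u

/-- The kernel density estimate `f(y) = (1/(n hᵈ)) ∑ᵢ K((y - xᵢ)/h)`. -/
def KDE (d n : ℕ) (K : Euc d → ℝ) (x : Fin n → Euc d) (h : ℝ) (y : Euc d) : ℝ :=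
  (1 / ((n : ℝ) * h ^ d)) * ∑ i : Fin n, K (h⁻¹ • (y - x i))

/-- `f̌(y) = (1/(n hᵈ)) ∑ᵢ Ǩ(‖(y - xᵢ)/h‖²/2)`. -/
def fcheck (d n : ℕ) (Kcheck : ℝ → ℝ) (x : Fin n → Euc d) (h : ℝ) (y : Euc d) : ℝ :=
  (1 / ((n : ℝ) * h ^ d)) * ∑ i : Fin n, Kcheck (‖h⁻¹ • (y - x i)‖ ^ 2 / 2)

/-- The mean shift vector `m(y)`: zero if `f̌(y) = 0`, and otherwise
`m(y) = ∑ᵢ Ǩ(‖(y - xᵢ)/h‖²/2)(xᵢ - y) / ∑ᵢ Ǩ(‖(y - xᵢ)/h‖²/2)`. -/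
def msMap (d n : ℕ) (Kcheck : ℝ → ℝ) (x : Fin n → Euc d) (h : ℝ) (y : Euc d) : Euc d :=
  if fcheck d n Kcheck x h y = 0 then 0
  else (∑ i : Fin n, Kcheck (‖h⁻¹ • (y - x i)‖ ^ 2 / 2))⁻¹ •
    ∑ i : Fin n, Kcheck (‖h⁻¹ • (y - x i)‖ ^ 2 / 2) • (x i - y)

/-- `y` is a mean shift iteration sequence: `y (t+1) = y t + m (y t)` for all `t`. -/
def MSSeq (d n : ℕ) (Kcheck : ℝ → ℝ) (x : Fin n → Euc d) (h : ℝ) (y : ℕ → Euc d) : Prop :=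
  ∀ t : ℕ, y (t + 1) = y t + msMap d n Kcheck x h (y t)

/-- `f` has the Łojasiewicz property on the set `S`. -/
def LojasiewiczOn (d : ℕ) (f : Euc d → ℝ) (S : Set (Euc d)) : Prop :=
  ∃ ε > (0:ℝ), ∃ c > (0:ℝ), ∃ θ ∈ Set.Ico (0:ℝ) 1,
    ∀ x' ∈ S, ∀ x ∈ S, ‖x' - x‖ < ε → 0 ≤ f x' - f x →
      ‖gradient f x‖ ≥ c * (f x' - f x) ^ θ

/-- `f` satisfies the Łojasiewicz inequality at `ybar` with exponent `θ`, on the set `S`. -/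
def LojasiewiczAtWith (d : ℕ) (f : Euc d → ℝ) (S : Set (Euc d)) (ybar : Euc d) (θ : ℝ) : Prop :=
  ∃ ε > (0:ℝ), ∃ c > (0:ℝ),
    ∀ y ∈ S, ‖ybar - y‖ < ε → 0 ≤ f ybar - f y →
      ‖gradient f y‖ ≥ c * (f ybar - f y) ^ θ

lemma ms_Kcheck_nonneg {Khat Kcheck : ℝ → ℝ} (hQM : AssumptionQM Khat Kcheck)
    (u : ℝ) (hu : 0 ≤ u) : 0 ≤ Kcheck u := by
  rcases hu.eq_or_lt with rfl | hu
  · have : -(Kcheck 0) ≤ 0 := by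
      refine le_of_tendsto hQM.rderiv0 ?_
      filter_upwards [self_mem_nhdsWithin] with v hv
      have hv : 0 < v := hv
      have := hQM.antitoneOn (by simp : (0:ℝ) ∈ Set.Ici 0) (show v ∈ Set.Ici (0:ℝ) from hv.le) hv.le
      exact div_nonpos_of_nonpos_of_nonneg (by linarith) hv.le
    linarith
  · have h1 := hQM.subdiff u hu (u + 1) (show (0:ℝ) ≤ u + 1 by linarith)
    have h2 := hQM.antitoneOn (show u ∈ Set.Ici (0:ℝ) from hu.le)
      (show u + 1 ∈ Set.Ici (0:ℝ) from (by linarith : (0:ℝ) ≤ u + 1)) (by linarith)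
    nlinarith

lemma ms_Kcheck_le {Khat Kcheck : ℝ → ℝ} (hQM : AssumptionQM Khat Kcheck)
    (u : ℝ) (hu : 0 ≤ u) : Kcheck u ≤ Kcheck 0 := by
  rcases hu.eq_or_lt with rfl | hu
  · exact le_rfl
  · have h1 := hQM.subdiff u hu 0 (by simp)
    have h3 : -(Kcheck 0) ≤ (Khat u - Khat 0) / u := by
      refine le_of_tendsto hQM.rderiv0 ?_
      filter_upwards [Ioo_mem_nhdsGT hu] with v hv
      have h0v : 0 < v := hv.1
      have hc := hQM.convexOn.2 (by simp : (0:ℝ) ∈ Set.Ici 0) (show u ∈ Set.Ici (0:ℝ) from hu.le)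
        (show 0 ≤ 1 - v / u by rw [sub_nonneg, div_le_one hu]; exact hv.2.le)
        (show 0 ≤ v / u by positivity) (by ring)
      have e : (1 - v / u) • (0:ℝ) + (v / u) • u = v := by
        simp only [smul_eq_mul]; field_simp; ring
      rw [e] at hc
      simp only [smul_eq_mul] at hc
      rw [div_le_iff₀ h0v]
      have : (Khat u - Khat 0) / u * v = v / u * (Khat u - Khat 0) := by ring
      rw [this]; nlinarith
    rw [le_div_iff₀ hu] at h3
    have : Kcheck u * u ≤ Kcheck 0 * u := by linarith
    exact le_of_mul_le_mul_right this hu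

lemma ms_gradient_K {d : ℕ} {K : Euc d → ℝ} {Khat Kcheck : ℝ → ℝ}
    (hRS : AssumptionRS d K Khat) (hQM : AssumptionQM Khat Kcheck)
    (hK : Differentiable ℝ K) (z : Euc d) :
    gradient K z = -(Kcheck (‖z‖ ^ 2 / 2) • z) := by
  have hG := (hK z).hasGradientAt.hasFDerivAt
  by_cases hz : z = 0
  · subst hz
    have hmax : IsLocalMax K 0 := by
      refine Filter.Eventually.of_forall fun w => ?_
      rw [hRS.radial w, hRS.radial 0]
      refine hQM.antitoneOn ?_ ?_ ?_
      · simp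
      · exact (by positivity : (0:ℝ) ≤ ‖w‖ ^ 2 / 2)
      · simp; positivity
    have := hmax.hasFDerivAt_eq_zero hG
    have h1 : gradient K 0 = 0 := (InnerProductSpace.toDual ℝ (Euc d)).map_eq_zero_iff.1 this
    simpa using h1
  · have hu : 0 < ‖z‖ ^ 2 / 2 := by have := norm_pos_iff.2 hz; positivity
    set c := Kcheck (‖z‖ ^ 2 / 2) with hc
    have hmin : IsLocalMin (fun w => K w + c / 2 * ‖w‖ ^ 2) z := by
      refine Filter.Eventually.of_forall fun w => ?_
      have := hQM.subdiff _ hu (‖w‖ ^ 2 / 2) (by positivity : (0:ℝ) ≤ ‖w‖ ^ 2 / 2)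
      simp only [hRS.radial w, hRS.radial z]
      rw [← hc] at this
      linarith
    have hs : HasFDerivAt (fun w : Euc d => ‖w‖ ^ 2) ((2:ℕ) • innerSL ℝ z) z :=
      (hasStrictFDerivAt_norm_sq z).hasFDerivAt
    have h0 := hmin.hasFDerivAt_eq_zero (hG.add (hs.const_mul (c / 2)))
    refine ext_inner_right ℝ fun v => ?_
    have := congrArg (fun L => L v) h0
    simp [inner_smul_left] at this ⊢
    linarith

lemma ms_gradient_KDE {d n : ℕ} {K : Euc d → ℝ} (x : Fin n → Euc d) (h : ℝ)
    (hK : Differentiable ℝ K) (y : Euc d) :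
    gradient (KDE d n K x h) y =
      (1 / ((n : ℝ) * h ^ d)) • ∑ i : Fin n, h⁻¹ • gradient K (h⁻¹ • (y - x i)) := by
  refine HasGradientAt.gradient ?_
  rw [hasGradientAt_iff_hasFDerivAt]
  have hi : ∀ i : Fin n, HasFDerivAt (fun w => K (h⁻¹ • (w - x i)))
      ((InnerProductSpace.toDual ℝ (Euc d) (gradient K (h⁻¹ • (y - x i)))).comp
        (h⁻¹ • ContinuousLinearMap.id ℝ (Euc d))) y := fun i =>
    HasFDerivAt.comp y (hK _).hasGradientAt.hasFDerivAt
      (((hasFDerivAt_id y).sub_const (x i)).const_smul h⁻¹)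
  have := (HasFDerivAt.fun_sum (u := Finset.univ) fun i _ => hi i).const_mul (1 / ((n : ℝ) * h ^ d))
  refine this.congr_fderiv ?_
  ext v
  simp

lemma ms_main {d n : ℕ} (hn : 0 < n)
    {K : Euc d → ℝ} {Khat Kcheck : ℝ → ℝ}
    (hRS : AssumptionRS d K Khat) (hQM : AssumptionQM Khat Kcheck)
    (x : Fin n → Euc d) (h : ℝ) (hh : 0 < h)
    (hK : Differentiable ℝ K)
    (y : ℕ → Euc d) (hy : MSSeq d n Kcheck x h y)
    (C₂ C₃ : ℝ) (h2 : 0 < C₂) (h3 : 0 ≤ C₃) (hb : ∀ u : ℝ, 0 ≤ u → Kcheck u ≤ C₂)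
    (hL : LipschitzWith C₃.toNNReal (gradient K)) (t : ℕ) :
    h ^ (d + 2) / (C₂ + C₃) * ‖gradient (KDE d n K x h) (y (t + 1))‖ ≤ ‖y (t + 1) - y t‖ := by
  have hnR : (0:ℝ) < n := by exact_mod_cast hn
  set a := y t with ha
  set b := y (t + 1) with hb'
  have hm : b - a = msMap d n Kcheck x h a := by rw [hb', hy t]; simp [ha]
  have hc : 0 < 1 / ((n : ℝ) * h ^ d) := by positivity
  -- gradient difference
  have hdiff : ‖gradient (KDE d n K x h) b - gradient (KDE d n K x h) a‖
      ≤ C₃ / h ^ (d + 2) * ‖b - a‖ := by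
    rw [ms_gradient_KDE x h hK, ms_gradient_KDE x h hK, ← smul_sub, ← Finset.sum_sub_distrib,
      norm_smul, Real.norm_of_nonneg hc.le]
    have : ‖∑ i : Fin n, (h⁻¹ • gradient K (h⁻¹ • (b - x i)) - h⁻¹ • gradient K (h⁻¹ • (a - x i)))‖
        ≤ ∑ i : Fin n, h⁻¹ * (C₃ * (h⁻¹ * ‖b - a‖)) := by
      refine norm_sum_le_of_le _ fun i _ => ?_
      rw [← smul_sub, norm_smul, Real.norm_of_nonneg (by positivity : 0 ≤ h⁻¹)]
      refine mul_le_mul_of_nonneg_left ?_ (by positivity)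
      have := hL.norm_sub_le (h⁻¹ • (b - x i)) (h⁻¹ • (a - x i))
      rwa [← smul_sub, sub_sub_sub_cancel_right, norm_smul,
        Real.norm_of_nonneg (by positivity : 0 ≤ h⁻¹), Real.coe_toNNReal _ h3] at this
    refine (mul_le_mul_of_nonneg_left this hc.le).trans_eq ?_
    simp only [Finset.sum_const, Finset.card_univ, Fintype.card_fin, nsmul_eq_mul]
    field_simp
    ring
  -- gradient at a
  have hga : ‖gradient (KDE d n K x h) a‖ ≤ C₂ / h ^ (d + 2) * ‖b - a‖ := by
    have hnn : ∀ i, 0 ≤ Kcheck (‖h⁻¹ • (a - x i)‖ ^ 2 / 2) := fun i =>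
      ms_Kcheck_nonneg hQM _ (by positivity)
    have hS0 : 0 ≤ ∑ i : Fin n, Kcheck (‖h⁻¹ • (a - x i)‖ ^ 2 / 2) :=
      Finset.sum_nonneg fun i _ => hnn i
    have hS2 : ∑ i : Fin n, Kcheck (‖h⁻¹ • (a - x i)‖ ^ 2 / 2) ≤ n * C₂ := by
      refine (Finset.sum_le_sum fun i _ => hb _ (by positivity)).trans_eq ?_
      simp
    have hmm : ∑ i : Fin n, Kcheck (‖h⁻¹ • (a - x i)‖ ^ 2 / 2) • (x i - a) =
        (∑ i : Fin n, Kcheck (‖h⁻¹ • (a - x i)‖ ^ 2 / 2)) • (b - a) := by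
      rw [hm, msMap]
      have hf : fcheck d n Kcheck x h a = 0 ↔
          ∑ i : Fin n, Kcheck (‖h⁻¹ • (a - x i)‖ ^ 2 / 2) = 0 := by
        rw [fcheck, mul_eq_zero, or_iff_right hc.ne']
      split_ifs with h0
      · rw [hf, Finset.sum_eq_zero_iff_of_nonneg fun i _ => hnn i] at h0
        rw [smul_zero]
        exact Finset.sum_eq_zero fun i hi => by rw [h0 i hi, zero_smul]
      · rw [smul_inv_smul₀ (fun h1 => h0 (hf.2 h1))]
    have hG : gradient (KDE d n K x h) a = (1 / ((n : ℝ) * h ^ (d + 2))) •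
        ∑ i : Fin n, Kcheck (‖h⁻¹ • (a - x i)‖ ^ 2 / 2) • (x i - a) := by
      rw [ms_gradient_KDE x h hK, Finset.smul_sum, Finset.smul_sum]
      refine Finset.sum_congr rfl fun i _ => ?_
      rw [ms_gradient_K hRS hQM hK, ← neg_sub a (x i)]
      generalize Kcheck (‖h⁻¹ • (a - x i)‖ ^ 2 / 2) = k
      simp only [smul_neg, smul_smul]
      congr 2
      field_simp
      ring
    rw [hG, hmm, smul_smul, norm_smul, Real.norm_of_nonneg (by positivity)]
    refine mul_le_mul_of_nonneg_right ?_ (norm_nonneg _)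
    refine (mul_le_mul_of_nonneg_left hS2 (by positivity)).trans_eq ?_
    field_simp
  have hfin : ‖gradient (KDE d n K x h) b‖ ≤ (C₂ + C₃) / h ^ (d + 2) * ‖b - a‖ := by
    have h5 := norm_le_norm_add_norm_sub (gradient (KDE d n K x h) a) (gradient (KDE d n K x h) b)
    rw [norm_sub_rev] at h5
    have : (C₂ + C₃) / h ^ (d + 2) * ‖b - a‖ =
      C₂ / h ^ (d + 2) * ‖b - a‖ + C₃ / h ^ (d + 2) * ‖b - a‖ := by ring
    linarith
  have hs : 0 < C₂ + C₃ := by linarith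
  refine (mul_le_mul_of_nonneg_left hfin (by positivity)).trans_eq ?_
  field_simp

/-- Under Assumptions RS and QM with `K` differentiable with Lipschitz-continuous
gradient, starting from `y 0` with `f (y 0) > 0`, there exists `c̄ > 0` such that the relative
error condition `‖y_{t+1} − y_t‖ ≥ c̄‖∇f(y_{t+1})‖` holds for every `t`; in fact one can take
`c̄ = h^{d+2}/(C₂ + C₃)` where `C₂ > 0` bounds `Ǩ` from above and `C₃ ≥ 0` is a Lipschitz
constant of `∇K`. -/
theorem ms_relative_error_condition
    (d n : ℕ) (hd : 0 < d) (hn : 0 < n)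
    (K : Euc d → ℝ) (Khat Kcheck : ℝ → ℝ)
    (hRS : AssumptionRS d K Khat) (hQM : AssumptionQM Khat Kcheck)
    (x : Fin n → Euc d) (h : ℝ) (hh : 0 < h)
    (hK : Differentiable ℝ K)
    (hKLip : ∃ L : NNReal, LipschitzWith L (gradient K))
    (y : ℕ → Euc d) (hy : MSSeq d n Kcheck x h y)
    (hy0 : 0 < KDE d n K x h (y 0)) :
    (∃ cbar : ℝ, 0 < cbar ∧ ∀ t : ℕ,
        cbar * ‖gradient (KDE d n K x h) (y (t + 1))‖ ≤ ‖y (t + 1) - y t‖) ∧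
    ∀ C₂ C₃ : ℝ, 0 < C₂ → 0 ≤ C₃ → (∀ u : ℝ, 0 ≤ u → Kcheck u ≤ C₂) →
      LipschitzWith C₃.toNNReal (gradient K) →
      ∀ t : ℕ,
        h ^ (d + 2) / (C₂ + C₃) * ‖gradient (KDE d n K x h) (y (t + 1))‖ ≤
          ‖y (t + 1) - y t‖ := by
  have key := ms_main hn hRS hQM x h hh hK y hy
  refine ⟨?_, key⟩
  obtain ⟨L, hL⟩ := hKLip
  have h0 := ms_Kcheck_nonneg hQM 0 le_rfl
  have hL0 : (0:ℝ) ≤ L := L.2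
  exact ⟨h ^ (d + 2) / (Kcheck 0 + 1 + L), by positivity,
    key (Kcheck 0 + 1) L (by linarith) hL0
      (fun u hu => (ms_Kcheck_le hQM u hu).trans (by linarith)) (by simpa using hL)⟩
end
end

section
/- (Finite-time convergence when θ < 1/2.) Assume Assumptions RS and QM, and let (y_t)_{t∈ℕ} be the mode estimate sequence obtained by the MS iteration starting from y₁ with f(y₁) > 0. Assume that for some τ ∈ ℕ, with S := closure of the convex hull of {y_t : t ≥ τ}: the KDE f is differentiable on S with Lipschitz-continuous gradient on S, and f has the Łojasiewicz property on S; and that y_t converges to ȳ and f satisfies the Łojasiewicz inequality at ȳ with some exponent θ ∈ [0, 1/2), i.e. there are ε > 0, c > 0 such that ‖∇f(y)‖ ≥ c·(f(ȳ) − f(y))^θ for all y ∈ S with ‖ȳ − y‖ < ε and f(ȳ) − f(y) ≥ 0. Then (y_t)_{t∈ℕ} converges in a finite number of iterations: there exists T ∈ ℕ such that y_t = ȳ for all t ≥ T. -/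
open Set Filter Topology MeasureTheory
open scoped BigOperators RealInnerProductSpace

noncomputable section

/-- The subgradient inequality for all `u ≥ 0`. -/
lemma qm_sub {Khat Kcheck : ℝ → ℝ} (hQM : AssumptionQM Khat Kcheck) {u v : ℝ}
    (hu : 0 ≤ u) (hv : 0 ≤ v) : -(Kcheck u) * (v - u) ≤ Khat v - Khat u := by
  rcases hu.eq_or_lt with rfl | hu
  · rcases hv.eq_or_lt with rfl | hv
    · simp
    · have hle : -(Kcheck 0) ≤ (Khat v - Khat 0) / v := by
        refine le_of_tendsto hQM.rderiv0 ?_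
        filter_upwards [Ioo_mem_nhdsGT hv] with s hs
        have := hQM.convexOn.secant_mono (a := 0) (x := s) (y := v) (by simp) hs.1.le hv.le
          hs.1.ne' hv.ne' hs.2.le
        simpa using this
      rw [le_div_iff₀ hv] at hle
      simpa using hle
  · exact hQM.subdiff u hu v hv

lemma qm_nonneg {Khat Kcheck : ℝ → ℝ} (hQM : AssumptionQM Khat Kcheck) {u : ℝ}
    (hu : 0 ≤ u) : 0 ≤ Kcheck u := by
  have h1 := qm_sub hQM hu (v := u + 1) (by linarith)
  have h2 := hQM.antitoneOn (a := u) (b := u + 1) hu (by simp; linarith) (by linarith)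
  nlinarith

lemma qm_le {Khat Kcheck : ℝ → ℝ} (hQM : AssumptionQM Khat Kcheck) {u : ℝ}
    (hu : 0 ≤ u) : Kcheck u ≤ Kcheck 0 := by
  rcases hu.eq_or_lt with rfl | hu
  · exact le_rfl
  · have h1 := qm_sub hQM hu.le (v := 0) le_rfl
    have h2 := qm_sub hQM le_rfl hu.le
    nlinarith

lemma fcheck_nonneg (d n : ℕ) {Khat Kcheck : ℝ → ℝ} (hQM : AssumptionQM Khat Kcheck)
    (x : Fin n → Euc d) (h : ℝ) (hh : 0 < h) (y : Euc d) : 0 ≤ fcheck d n Kcheck x h y := by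
  unfold fcheck
  have := Finset.sum_nonneg (s := Finset.univ)
    (f := fun i : Fin n => Kcheck (‖h⁻¹ • (y - x i)‖ ^ 2 / 2))
    (fun i _ => qm_nonneg hQM (by positivity))
  positivity

lemma fcheck_le (d n : ℕ) {Khat Kcheck : ℝ → ℝ} (hQM : AssumptionQM Khat Kcheck)
    (x : Fin n → Euc d) (h : ℝ) (hh : 0 < h) (y : Euc d) :
    fcheck d n Kcheck x h y ≤ (1 / ((n : ℝ) * h ^ d)) * ∑ _i : Fin n, Kcheck 0 := by
  unfold fcheck
  gcongr with i
  exact qm_le hQM (by positivity)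

lemma msMap_eq (d n : ℕ) (hn : 0 < n) {Khat Kcheck : ℝ → ℝ} (hQM : AssumptionQM Khat Kcheck)
    (x : Fin n → Euc d) (h : ℝ) (hh : 0 < h) (y : Euc d) :
    (∑ i : Fin n, Kcheck (‖h⁻¹ • (y - x i)‖ ^ 2 / 2)) • msMap d n Kcheck x h y
      = ∑ i : Fin n, Kcheck (‖h⁻¹ • (y - x i)‖ ^ 2 / 2) • (x i - y) := by
  have hn' : (0:ℝ) < n := by exact_mod_cast hn
  have hC : (1 / ((n : ℝ) * h ^ d)) ≠ 0 := by positivity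
  unfold msMap
  split_ifs with h0
  · have hW : ∑ i : Fin n, Kcheck (‖h⁻¹ • (y - x i)‖ ^ 2 / 2) = 0 := by
      unfold fcheck at h0
      exact (mul_eq_zero.mp h0).resolve_left hC
    rw [hW, zero_smul]
    rw [Finset.sum_eq_zero_iff_of_nonneg (fun i _ => qm_nonneg hQM (by positivity))] at hW
    symm
    exact Finset.sum_eq_zero (fun i hi => by rw [hW i hi, zero_smul])
  · rw [smul_smul, mul_inv_cancel₀, one_smul]
    intro h1
    apply h0
    unfold fcheck
    rw [h1, mul_zero]

/-- Quadratic minorization. -/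
lemma kde_minor (d n : ℕ) (hn : 0 < n) {K : Euc d → ℝ} {Khat Kcheck : ℝ → ℝ}
    (hRS : AssumptionRS d K Khat) (hQM : AssumptionQM Khat Kcheck)
    (x : Fin n → Euc d) (h : ℝ) (hh : 0 < h) (y z : Euc d) :
    fcheck d n Kcheck x h y / h ^ 2 *
      (inner ℝ (msMap d n Kcheck x h y) (z - y) - ‖z - y‖ ^ 2 / 2)
      ≤ KDE d n K x h z - KDE d n K x h y := by
  have hm := msMap_eq d n hn hQM x h hh y
  set m := msMap d n Kcheck x h y
  have key : ∀ i : Fin n, Kcheck (‖h⁻¹ • (y - x i)‖ ^ 2 / 2) *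
      (inner ℝ (x i - y) (z - y) - ‖z - y‖ ^ 2 / 2) / h ^ 2
      ≤ K (h⁻¹ • (z - x i)) - K (h⁻¹ • (y - x i)) := by
    intro i
    rw [hRS.radial, hRS.radial]
    refine le_trans (le_of_eq ?_) (qm_sub hQM (by positivity) (by positivity))
    rw [norm_smul h⁻¹ (z - x i), mul_pow]
    have e : ‖z - x i‖ ^ 2 = ‖z - y‖ ^ 2 - 2 * inner ℝ (x i - y) (z - y) + ‖y - x i‖ ^ 2 := by
      have : z - x i = (z - y) - (x i - y) := by abel
      rw [this, norm_sub_sq_real, real_inner_comm, norm_sub_rev (x i) y]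
    have e2 : ‖h⁻¹ • (y - x i)‖ ^ 2 = (h ^ 2)⁻¹ * ‖y - x i‖ ^ 2 := by
      rw [norm_smul, mul_pow, norm_inv, Real.norm_eq_abs, inv_pow, sq_abs]
    rw [e, norm_inv, Real.norm_eq_abs, inv_pow, sq_abs]
    generalize hk : Kcheck (‖h⁻¹ • (y - x i)‖ ^ 2 / 2) = k
    rw [e2]
    field_simp
    ring
  have hin : (∑ i : Fin n, Kcheck (‖h⁻¹ • (y - x i)‖ ^ 2 / 2)) * inner ℝ m (z - y)
      = ∑ i : Fin n, Kcheck (‖h⁻¹ • (y - x i)‖ ^ 2 / 2) * inner ℝ (x i - y) (z - y) := by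
    rw [← real_inner_smul_left, hm, sum_inner]
    simp_rw [real_inner_smul_left]
  have hsum := Finset.sum_le_sum (s := Finset.univ) (fun i _ => key i)
  rw [Finset.sum_sub_distrib, ← Finset.sum_div] at hsum
  simp_rw [mul_sub] at hsum
  rw [Finset.sum_sub_distrib, ← hin, ← Finset.sum_mul] at hsum
  unfold KDE fcheck
  have hC : 0 ≤ (1 / ((n : ℝ) * h ^ d)) := by positivity
  have := mul_le_mul_of_nonneg_left hsum hC
  rw [mul_sub] at this
  refine le_trans (le_of_eq ?_) this
  ring

lemma kde_grad (d n : ℕ) (hn : 0 < n) {K : Euc d → ℝ} {Khat Kcheck : ℝ → ℝ}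
    (hRS : AssumptionRS d K Khat) (hQM : AssumptionQM Khat Kcheck)
    (x : Fin n → Euc d) (h : ℝ) (hh : 0 < h) (y : Euc d)
    (hd : DifferentiableAt ℝ (KDE d n K x h) y) :
    gradient (KDE d n K x h) y
      = (fcheck d n Kcheck x h y / h ^ 2) • msMap d n Kcheck x h y := by
  have hmin := kde_minor d n hn hRS hQM x h hh y
  set a := fcheck d n Kcheck x h y / h ^ 2
  set m := msMap d n Kcheck x h y
  set f := KDE d n K x h
  have hf : HasFDerivAt f (innerSL ℝ (gradient f y)) y := hd.hasGradientAt.hasFDerivAt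
  have hid : HasFDerivAt (fun z : Euc d => z - y) (ContinuousLinearMap.id ℝ (Euc d)) y :=
    (hasFDerivAt_id y).sub_const y
  have h1 : HasFDerivAt (fun z : Euc d => inner ℝ m (z - y)) (innerSL ℝ m) y := by
    have := (innerSL ℝ m).hasFDerivAt.comp y hid
    rw [ContinuousLinearMap.comp_id] at this
    exact this
  have h2 := hid.norm_sq
  have h3 := hf.sub ((h1.sub (h2.mul_const (1/2 : ℝ))).const_mul a)
  have hloc : IsLocalMin (fun z => f z - a * (inner ℝ m (z - y) - ‖z - y‖ ^ 2 * (1 / 2))) y := by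
    refine Filter.Eventually.of_forall (fun z => ?_)
    have := hmin z
    simp only [sub_self, inner_zero_right, norm_zero]
    norm_num
    linarith
  have h4 := hloc.hasFDerivAt_eq_zero h3
  refine ext_inner_right ℝ (fun v => ?_)
  have h5 := congrArg (fun L : Euc d →L[ℝ] ℝ => L v) h4
  generalize gradient f y = G at h5 ⊢
  simp at h5
  rw [real_inner_smul_left]
  linarith

/-- Finite-time convergence when `θ < 1/2`: under the assumptions of the
convergence theorem, if moreover `y t → ȳ` and `f` satisfies the Łojasiewicz inequality at `ȳ`
with some exponent `θ ∈ [0, 1/2)`, then the sequence converges in a finite number of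
iterations. -/
theorem ms_finite_time_convergence
    (d n : ℕ) (hd : 0 < d) (hn : 0 < n)
    (K : Euc d → ℝ) (Khat Kcheck : ℝ → ℝ)
    (hRS : AssumptionRS d K Khat) (hQM : AssumptionQM Khat Kcheck)
    (x : Fin n → Euc d) (h : ℝ) (hh : 0 < h)
    (y : ℕ → Euc d) (hy : MSSeq d n Kcheck x h y)
    (hy0 : 0 < KDE d n K x h (y 0))
    (τ : ℕ) (S : Set (Euc d))
    (hS : S = closure (convexHull ℝ {z : Euc d | ∃ t : ℕ, τ ≤ t ∧ z = y t}))
    (ha1diff : ∀ z ∈ S, DifferentiableAt ℝ (KDE d n K x h) z)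
    (ha1lip : ∃ L : NNReal, LipschitzOnWith L (gradient (KDE d n K x h)) S)
    (ha2 : LojasiewiczOn d (KDE d n K x h) S)
    (ybar : Euc d) (hconv : Filter.Tendsto y Filter.atTop (nhds ybar))
    (θ : ℝ) (hθ : θ ∈ Set.Ico (0:ℝ) (1/2))
    (hloja : LojasiewiczAtWith d (KDE d n K x h) S ybar θ) :
    ∃ T : ℕ, ∀ t : ℕ, T ≤ t → y t = ybar := by
  set f := KDE d n K x h with hfdef
  obtain ⟨ε, hε, c, hc, hL⟩ := hloja
  have hcont : Continuous f := by
    rw [hfdef]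
    unfold KDE
    have := hRS.cont
    fun_prop
  have hstep : ∀ t, fcheck d n Kcheck x h (y t) / h ^ 2 *
      (‖msMap d n Kcheck x h (y t)‖ ^ 2 / 2) ≤ f (y (t+1)) - f (y t) := by
    intro t
    have := kde_minor d n hn hRS hQM x h hh (y t) (y (t+1))
    rw [hy t, add_sub_cancel_left, real_inner_self_eq_norm_sq] at this
    rw [hy t]
    refine le_trans (le_of_eq ?_) this
    ring
  have hnn : ∀ t, 0 ≤ fcheck d n Kcheck x h (y t) / h ^ 2 := fun t =>
    div_nonneg (fcheck_nonneg d n hQM x h hh _) (by positivity)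
  have hmono : Monotone (fun t => f (y t)) := monotone_nat_of_le_succ (fun t => by
    have := hstep t
    have := mul_nonneg (hnn t) (by positivity : 0 ≤ ‖msMap d n Kcheck x h (y t)‖ ^ 2 / 2)
    linarith)
  have hlim : Tendsto (fun t => f (y t)) atTop (𝓝 (f ybar)) := (hcont.tendsto ybar).comp hconv
  have hle : ∀ t, f (y t) ≤ f ybar := fun t => hmono.ge_of_tendsto hlim t
  obtain ⟨A, hA⟩ : ∃ A : ℝ, ∀ t, fcheck d n Kcheck x h (y t) / h ^ 2 ≤ A :=
    ⟨_, fun t => div_le_div_of_nonneg_right (fcheck_le d n hQM x h hh (y t)) (by positivity)⟩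
  have hyS : ∀ t, τ ≤ t → y t ∈ S := by
    intro t ht
    rw [hS]
    exact subset_closure (subset_convexHull ℝ _ ⟨t, ht, rfl⟩)
  -- the squared gradient is bounded by the gap
  have hgrad : ∀ t, τ ≤ t → ‖gradient f (y t)‖ ^ 2 ≤ 2 * A * (f ybar - f (y t)) := by
    intro t ht
    rw [hfdef, kde_grad d n hn hRS hQM x h hh (y t) (ha1diff _ (hyS t ht)), ← hfdef, norm_smul,
      Real.norm_of_nonneg (hnn t), mul_pow]
    have h1 := hstep t
    have h2 := hle (t+1)
    have h3 := hle t
    have h4 := hA t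
    have h5 := hnn t
    set a := fcheck d n Kcheck x h (y t) / h ^ 2
    have h6 := mul_le_mul_of_nonneg_left (h1.trans (sub_le_sub_right h2 _)) h5
    have h7 := mul_le_mul_of_nonneg_right h4 (sub_nonneg.mpr h3)
    nlinarith
  have hev1 : ∀ᶠ t in atTop, ‖ybar - y t‖ < ε := by
    have : Tendsto (fun t => ‖ybar - y t‖) atTop (𝓝 0) := by
      have := (tendsto_const_nhds (x := ybar)).sub hconv
      simpa using this.norm
    exact this.eventually_lt_const hε
  have hgap : Tendsto (fun t => f ybar - f (y t)) atTop (𝓝 0) := by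
    simpa using (tendsto_const_nhds (x := f ybar)).sub hlim
  have hp : 0 < 1 - 2 * θ := by linarith [hθ.2]
  have hev2 : ∀ᶠ t in atTop, 2 * A * (f ybar - f (y t)) ^ (1 - 2 * θ) < c ^ 2 := by
    have h1 := (hgap.rpow_const (p := 1 - 2 * θ) (Or.inr hp.le)).const_mul (2 * A)
    rw [Real.zero_rpow hp.ne', mul_zero] at h1
    exact h1.eventually_lt_const (by positivity)
  obtain ⟨T, hT⟩ := eventually_atTop.mp (hev1.and (hev2.and (eventually_ge_atTop τ)))
  have hzero : ∀ t, T ≤ t → f (y t) = f ybar := by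
    intro t ht
    obtain ⟨h1, h2, h3⟩ := hT t ht
    by_contra hne
    have hD : 0 < f ybar - f (y t) := sub_pos.mpr (lt_of_le_of_ne (hle t) hne)
    have h4 := hL (y t) (hyS t h3) h1 hD.le
    have h5 := hgrad t h3
    set D := f ybar - f (y t)
    have h6 : (c * D ^ θ) ^ 2 ≤ 2 * A * D := le_trans (by gcongr) h5
    have h7 : D = D ^ (1 - 2 * θ) * (D ^ θ) ^ 2 := by
      rw [← Real.rpow_natCast, ← Real.rpow_mul hD.le, ← Real.rpow_add hD]
      norm_num
      rw [mul_comm θ 2]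
      simp
    have h8 : 0 < (D ^ θ) ^ 2 := by positivity
    have h9 := mul_lt_mul_of_pos_right h2 h8
    rw [mul_assoc, ← h7] at h9
    rw [mul_pow] at h6
    linarith
  have hm0 : ∀ t, T ≤ t → y (t+1) = y t := by
    intro t ht
    have h1 := hstep t
    rw [hzero t ht, hzero (t+1) (by omega), sub_self] at h1
    rw [hy t]
    by_cases h0 : fcheck d n Kcheck x h (y t) = 0
    · simp [msMap, h0]
    · have hpos : 0 < fcheck d n Kcheck x h (y t) / h ^ 2 :=
        div_pos (lt_of_le_of_ne (fcheck_nonneg d n hQM x h hh _) (Ne.symm h0)) (by positivity)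
      have h2 : ‖msMap d n Kcheck x h (y t)‖ ^ 2 / 2 ≤ 0 := by
        by_contra hcon
        push Not at hcon
        linarith [mul_pos hpos hcon]
      have h3 : ‖msMap d n Kcheck x h (y t)‖ = 0 := by
        have := sq_nonneg ‖msMap d n Kcheck x h (y t)‖
        exact pow_eq_zero_iff (two_ne_zero) |>.mp (by linarith)
      rw [norm_eq_zero.mp h3, add_zero]
  have hconst : ∀ t, T ≤ t → y t = y T := by
    intro t ht
    induction t, ht using Nat.le_induction with
    | base => rfl
    | succ t ht ih => rw [hm0 t ht, ih]
  have hyT : y T = ybar := by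
    refine tendsto_nhds_unique (tendsto_const_nhds.congr' ?_) hconv
    filter_upwards [eventually_ge_atTop T] with t ht
    exact (hconst t ht).symm
  exact ⟨T, fun t ht => (hconst t ht).trans hyT⟩
end
end
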